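/- Let 𝕁 = ℕ × (ℕ ∪ {ω}) be the Johnstone poset, ordered by (j, k) ≤ (m, n) iff (j = m and k ≤ n) or (n = ω and k ≤ m), and let 𝕁_⊤ be 𝕁 with a new largest element ⊤ adjoined. Then the Scott space Σ 𝕁_⊤ is not well-filtered. -/

import Mathlib

universe u v

open Set

/-- The specialization order on a topological space: `specLE x y` iff `x ∈ closure {y}`. -/
def specLE {X : Type*} [TopologicalSpace X] (x y : X) : Prop :=
  x ∈ closure ({y} : Set X)

/-- `a` is an upper bound of `D` with respect to the specialization order. -/
def specUB {X : Type*} [TopologicalSpace X] (D : Set X) (a : X) : Prop :=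
  ∀ d ∈ D, specLE d a

/-- `a` is a least upper bound of `D` with respect to the specialization order. -/
def specLUB {X : Type*} [TopologicalSpace X] (D : Set X) (a : X) : Prop :=
  specUB D a ∧ ∀ b, specUB D b → specLE a b

/-- `U` is Scott open with respect to the specialization order. -/
def ScottOpenSpec {X : Type*} [TopologicalSpace X] (U : Set X) : Prop :=
  (∀ x y, specLE x y → x ∈ U → y ∈ U) ∧
  ∀ D : Set X, D.Nonempty → DirectedOn specLE D → ∀ a, specLUB D a → a ∈ U →
    (D ∩ U).Nonempty

/-- A d-space (monotone convergence space): a T0 space which is a dcpo in its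
specialization order and in which every open set is Scott open with respect to
the specialization order. -/
def DSpace (X : Type*) [TopologicalSpace X] : Prop :=
  T0Space X ∧
  (∀ D : Set X, D.Nonempty → DirectedOn specLE D → ∃ a, specLUB D a) ∧
  (∀ U : Set X, IsOpen U → ScottOpenSpec U)

/-- A set is saturated if it is an intersection of open sets. -/
def Saturated {X : Type*} [TopologicalSpace X] (A : Set X) : Prop :=
  ∃ 𝒰 : Set (Set X), (∀ U ∈ 𝒰, IsOpen U) ∧ A = ⋂₀ 𝒰

/-- A T0 space is well-filtered if every filtered (under reverse inclusion) family of
nonempty compact saturated sets whose intersection is contained in an open set `U`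
has a member contained in `U`. -/
def WellFiltered (X : Type*) [TopologicalSpace X] : Prop :=
  T0Space X ∧
  ∀ 𝒦 : Set (Set X), 𝒦.Nonempty →
    (∀ K ∈ 𝒦, K.Nonempty ∧ IsCompact K ∧ Saturated K) →
    DirectedOn (fun A B => B ⊆ A) 𝒦 →
    ∀ U : Set X, IsOpen U → ⋂₀ 𝒦 ⊆ U → ∃ K ∈ 𝒦, K ⊆ U

/-- A nonempty closed set which is irreducible. -/
def IrredClosed {X : Type*} [TopologicalSpace X] (A : Set X) : Prop :=
  A.Nonempty ∧ IsClosed A ∧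
  ∀ F₁ F₂ : Set X, IsClosed F₁ → IsClosed F₂ → A ⊆ F₁ ∪ F₂ → (A ⊆ F₁ ∨ A ⊆ F₂)

/-- A space is sober if every irreducible closed set is the closure of a unique point. -/
def Sober (X : Type*) [TopologicalSpace X] : Prop :=
  ∀ A : Set X, IrredClosed A → ∃! x : X, A = closure ({x} : Set X)

/-- The specialization preorder on a topological space. -/
def specPreorder (Y : Type*) [TopologicalSpace Y] : Preorder Y where
  le := specLE
  le_refl x := subset_closure rfl
  le_trans x y z hxy hyz :=
    closure_minimal (Set.singleton_subset_iff.mpr hyz) isClosed_closure hxy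

/-- A Scott open subset of a poset: an upper set inaccessible by suprema of directed sets. -/
def IsScottOpen {P : Type*} [Preorder P] (U : Set P) : Prop :=
  IsUpperSet U ∧
  ∀ D : Set P, D.Nonempty → DirectedOn (· ≤ ·) D → ∀ a, IsLUB D a → a ∈ U →
    (D ∩ U).Nonempty

/-- The Scott topology on a poset. `Σ P` is `P` equipped with `scottTop P`. -/
def scottTop (P : Type*) [Preorder P] : TopologicalSpace P where
  IsOpen := IsScottOpen
  isOpen_univ := by
    refine ⟨isUpperSet_univ, fun D hD _ _ _ _ => ?_⟩
    obtain ⟨d, hd⟩ := hD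
    exact ⟨d, hd, trivial⟩
  isOpen_inter := by
    rintro U V ⟨hU1, hU2⟩ ⟨hV1, hV2⟩
    refine ⟨hU1.inter hV1, ?_⟩
    rintro D hne hdir a ha ⟨haU, haV⟩
    obtain ⟨d1, hd1D, hd1U⟩ := hU2 D hne hdir a ha haU
    obtain ⟨d2, hd2D, hd2V⟩ := hV2 D hne hdir a ha haV
    obtain ⟨d3, hd3D, h13, h23⟩ := hdir d1 hd1D d2 hd2D
    exact ⟨d3, hd3D, hU1 h13 hd1U, hV1 h23 hd2V⟩
  isOpen_sUnion := by
    intro S hS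
    refine ⟨isUpperSet_sUnion fun s hs => (hS s hs).1, ?_⟩
    rintro D hne hdir a ha ⟨U, hUS, haU⟩
    obtain ⟨d, hdD, hdU⟩ := (hS U hUS).2 D hne hdir a ha haU
    exact ⟨d, hdD, U, hUS, hdU⟩

/-- A dcpo: every nonempty directed subset has a least upper bound. -/
def IsDcpo (P : Type*) [Preorder P] : Prop :=
  ∀ D : Set P, D.Nonempty → DirectedOn (· ≤ ·) D → ∃ a, IsLUB D a

/-- The way-below relation. -/
def wayBelow {P : Type*} [Preorder P] (x y : P) : Prop :=
  ∀ D : Set P, D.Nonempty → DirectedOn (· ≤ ·) D → ∀ a, IsLUB D a → y ≤ a →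
    ∃ d ∈ D, x ≤ d

/-- A poset is Noetherian if every (nonempty) directed subset has a greatest member. -/
def Noetherian (P : Type*) [Preorder P] : Prop :=
  ∀ D : Set P, D.Nonempty → DirectedOn (· ≤ ·) D → ∃ m ∈ D, ∀ d ∈ D, d ≤ m

/-- An ideal: a (nonempty) directed lower set. -/
def IsIdealSet {P : Type*} [Preorder P] (I : Set P) : Prop :=
  I.Nonempty ∧ DirectedOn (· ≤ ·) I ∧ IsLowerSet I

/-- The Alexandroff topology on a poset: the open sets are the upper sets. -/
def alexTop (P : Type*) [Preorder P] : TopologicalSpace P where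
  IsOpen := IsUpperSet
  isOpen_univ := isUpperSet_univ
  isOpen_inter _ _ := IsUpperSet.inter
  isOpen_sUnion _ h := isUpperSet_sUnion h

/-- The space `X_⊤` obtained from `X` by adjoining a new top point `⊤` (here `none`):
the closed sets are the closed sets of `X` together with the whole space. -/
def topTop (X : Type*) [TopologicalSpace X] : TopologicalSpace (Option X) where
  IsOpen V := V = ∅ ∨ ∃ U : Set X, IsOpen U ∧ V = insert none (some '' U)
  isOpen_univ := by
    refine Or.inr ⟨Set.univ, isOpen_univ, ?_⟩
    ext (_ | a) <;> simp
  isOpen_inter := by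
    rintro V W (rfl | ⟨U₁, hU₁, rfl⟩) hW
    · exact Or.inl (by simp)
    rcases hW with rfl | ⟨U₂, hU₂, rfl⟩
    · exact Or.inl (by simp)
    · refine Or.inr ⟨U₁ ∩ U₂, hU₁.inter hU₂, ?_⟩
      ext (_ | a) <;> simp
  isOpen_sUnion := by
    classical
    intro S hS
    by_cases h0 : ⋃₀ S = ∅
    · exact Or.inl h0
    · refine Or.inr ⟨{x : X | some x ∈ ⋃₀ S}, ?_, ?_⟩
      · have h1 : {x : X | some x ∈ ⋃₀ S} = ⋃ V ∈ S, some ⁻¹' V := by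
          ext x; simp [Set.mem_sUnion]
        rw [h1]
        refine isOpen_biUnion fun V hV => ?_
        rcases hS V hV with rfl | ⟨U, hU, rfl⟩
        · rw [Set.preimage_empty]; exact isOpen_empty
        · have h2 : (some ⁻¹' (insert none (some '' U)) : Set X) = U := by
            ext x; simp
          rw [h2]; exact hU
      · have hnone : (none : Option X) ∈ ⋃₀ S := by
          obtain ⟨v, V, hVS, hvV⟩ := Set.nonempty_iff_ne_empty.mpr h0
          rcases hS V hVS with rfl | ⟨U, hU, rfl⟩
          · exact absurd hvV (by simp)
          · exact ⟨_, hVS, by simp⟩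
        ext (_ | a)
        · simp only [Set.mem_insert_iff, true_or, iff_true]
          exact hnone
        · simp [Set.mem_sUnion]

/-- A `𝐊`-set of a space `X` (relative to a class `K` of spaces): a set whose image
under any continuous map to a `𝐊`-space has the closure of a unique point as closure. -/
def IsKSet (K : (Y : Type u) → TopologicalSpace Y → Prop)
    (X : Type u) [tX : TopologicalSpace X] (A : Set X) : Prop :=
  ∀ (Y : Type u) (tY : TopologicalSpace Y), K Y tY →
    ∀ f : X → Y, @Continuous X Y tX tY f →
      ∃! y : Y, @closure Y tY (f '' A) = @closure Y tY {y}

/-- `𝐊(X)`: the collection of closed `𝐊`-sets of `X`. -/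
def KSets (K : (Y : Type u) → TopologicalSpace Y → Prop)
    (X : Type u) [TopologicalSpace X] : Set (Set X) :=
  {A : Set X | IsClosed A ∧ IsKSet K X A}

/-- The lower Vietoris topology on a family `G` of subsets of `X`, generated by the
sets `◊U = {A ∈ G | A ∩ U ≠ ∅}` for `U` open. -/
def lowerVietoris {X : Type*} [TopologicalSpace X] (G : Set (Set X)) :
    TopologicalSpace ↥G :=
  TopologicalSpace.generateFrom
    {S : Set ↥G | ∃ U : Set X, IsOpen U ∧ S = {A : ↥G | ((A : Set X) ∩ U).Nonempty}}

/-- A class `K` of spaces is adequate if `P_H(𝐊(X))` is a `𝐊`-space for every T0 space `X`. -/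
def Adequate (K : (Y : Type u) → TopologicalSpace Y → Prop) : Prop :=
  ∀ (X : Type u) (tX : TopologicalSpace X), @T0Space X tX →
    K ↥(@KSets K X tX) (@lowerVietoris X tX (@KSets K X tX))

/-- `⟨Z, η⟩` is a `𝐊`-reflection of `X`. -/
def IsKReflection (K : (Y : Type u) → TopologicalSpace Y → Prop)
    (X : Type u) (tX : TopologicalSpace X)
    (Z : Type u) (tZ : TopologicalSpace Z) (η : X → Z) : Prop :=
  K Z tZ ∧ @Continuous X Z tX tZ η ∧
  ∀ (Y : Type u) (tY : TopologicalSpace Y), K Y tY →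
    ∀ f : X → Y, @Continuous X Y tX tY f →
      ∃! g : Z → Y, @Continuous Z Y tZ tY g ∧ g ∘ η = f

/-- The carrier of the Johnstone poset `𝕁 = ℕ × (ℕ ∪ {ω})`. -/
structure Johnstone where
  fst : ℕ
  snd : WithTop ℕ

/-- The Johnstone order: `(j, k) ≤ (m, n)` iff `j = m` and `k ≤ n`, or `n = ω` and `k ≤ m`. -/
instance : PartialOrder Johnstone where
  le p q := (p.fst = q.fst ∧ p.snd ≤ q.snd) ∨ (q.snd = ⊤ ∧ p.snd ≤ (q.fst : WithTop ℕ))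
  le_refl p := Or.inl ⟨rfl, le_rfl⟩
  le_trans p q r hpq hqr := by
    rcases hpq with ⟨h1, h2⟩ | ⟨h1, h2⟩ <;> rcases hqr with ⟨h3, h4⟩ | ⟨h3, h4⟩
    · exact Or.inl ⟨h1.trans h3, h2.trans h4⟩
    · exact Or.inr ⟨h3, h2.trans h4⟩
    · have hr : r.snd = ⊤ := top_le_iff.mp (h1 ▸ h4)
      exact Or.inr ⟨hr, h3 ▸ h2⟩
    · rw [h1] at h4
      exact absurd h4 (by simp)
  le_antisymm p q hpq hqp := by
    obtain ⟨pf, ps⟩ := p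
    obtain ⟨qf, qs⟩ := q
    rcases hpq with ⟨h1, h2⟩ | ⟨h1, h2⟩ <;> rcases hqp with ⟨h3, h4⟩ | ⟨h3, h4⟩
    · dsimp at *
      cases h1
      cases le_antisymm h2 h4
      rfl
    · dsimp at *
      rw [h3] at h2
      rw [top_le_iff.mp h2] at h4
      exact absurd h4 (by simp)
    · dsimp at *
      rw [h1] at h4
      rw [top_le_iff.mp h4] at h2
      exact absurd h2 (by simp)
    · dsimp at *
      rw [h3] at h2
      exact absurd h2 (by simp)

/-- The class of d-spaces. -/
def dClass : (Y : Type u) → TopologicalSpace Y → Prop := fun Y tY => @DSpace Y tY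

/-- The class of well-filtered spaces. -/
def wfClass : (Y : Type u) → TopologicalSpace Y → Prop := fun Y tY => @WellFiltered Y tY

/-- The class of sober spaces. -/
def soberClass : (Y : Type u) → TopologicalSpace Y → Prop := fun Y tY => @Sober Y tY

/-!
In `𝕁` the chain `(m, 0) ≤ (m, 1) ≤ ⋯` has supremum `(m, ω)`, and `(m, k)` lies below every `(j, ω)`
with `k ≤ j`. Hence the sequence `j ↦ (j, ω)` converges to each of its own terms, and its tails are
a decreasing sequence of nonempty compact upper sets of `Σ 𝕁` with empty intersection. Once `⊤` is
added to every tail, the intersection becomes `{⊤}`, which contains no tail. It is open in `Σ 𝕁_⊤`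
because directed subsets of `𝕁` are bounded, so that `⊤` is not approximated from below.
-/

open Filter Topology

theorem isScott_scottTop (P : Type*) [Preorder P] : @IsScott P univ _ (scottTop P) := by
  let := scottTop P
  refine ⟨TopologicalSpace.ext_iff.mpr fun U => ?_⟩
  have hiff := @IsScott.isOpen_iff_isUpperSet_and_dirSupInaccOn P univ _ (scott P univ) U
    (@IsScott.mk P univ _ (scott P univ) rfl)
  rw [dirSupInaccOn_univ] at hiff
  exact hiff.symm

theorem saturated_of_isUpperSet {P : Type*} [Preorder P] [TopologicalSpace P] [ClosedIicTopology P]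
    {K : Set P} (hK : IsUpperSet K) : Saturated K := by
  refine ⟨(fun x => (Iic x)ᶜ) '' Kᶜ, ?_, ?_⟩
  · rintro _ ⟨x, -, rfl⟩
    exact isClosed_Iic.isOpen_compl
  · ext y
    rw [sInter_image, mem_iInter₂]
    exact ⟨fun hy x hx hyx => hx (hK hyx hy), fun h => by_contra fun hy => h y hy le_rfl⟩

section WithTop

variable {P : Type*} [Preorder P]

theorem isLUB_image_withTop_coe {s : Set P} {a : P} (h : IsLUB s a) :
    IsLUB ((↑) '' s) (a : WithTop P) := by
  refine ⟨WithTop.coe_mono.mem_upperBounds_image h.1, fun b hb => ?_⟩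
  induction b with
  | top => exact le_top
  | coe b =>
    exact WithTop.coe_le_coe.mpr <|
      h.2 fun x hx => WithTop.coe_le_coe.mp (hb (mem_image_of_mem _ hx))

theorem isUpperSet_insert_top_image_coe {K : Set P} (hK : IsUpperSet K) :
    IsUpperSet (insert ⊤ ((↑) '' K) : Set (WithTop P)) := by
  rintro x y hxy (rfl | ⟨a, ha, rfl⟩)
  · exact Or.inl (WithTop.top_le_iff.mp hxy)
  · induction y with
    | top => exact mem_insert _ _
    | coe b => exact Or.inr (mem_image_of_mem _ (hK (WithTop.coe_le_coe.mp hxy) ha))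

variable [TopologicalSpace (WithTop P)] [IsScott (WithTop P) univ]

theorem continuous_withTop_coe [TopologicalSpace P] [IsScott P univ] :
    Continuous ((↑) : P → WithTop P) :=
  (IsScott.scottContinuousOn_iff_continuous fun _ _ _ => mem_univ _).mp
    fun _ _ _ _ _ h => isLUB_image_withTop_coe h

theorem isOpen_singleton_withTop_top
    (hP : ∀ D : Set P, D.Nonempty → DirectedOn (· ≤ ·) D → BddAbove D) :
    IsOpen ({⊤} : Set (WithTop P)) := by
  rw [IsScott.isOpen_iff_isUpperSet_and_dirSupInaccOn (D := univ), dirSupInaccOn_univ]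
  refine ⟨fun x y hxy hx => WithTop.top_le_iff.mp (hx ▸ hxy), ?_⟩
  rintro D hD hdir _ hlub rfl
  by_contra hdisj
  have hsub : D ⊆ range ((↑) : P → WithTop P) := fun x hx =>
    WithTop.ne_top_iff_exists.mp fun h => hdisj ⟨x, hx, h⟩
  obtain ⟨E, rfl⟩ := subset_range_iff_exists_image_eq.mp hsub
  have hE : DirectedOn (· ≤ ·) E := (directedOn_image.mp hdir).mono fun _ _ => WithTop.coe_le_coe.mp
  obtain ⟨b, hb⟩ := hP E hD.of_image hE
  have htop : (⊤ : WithTop P) ≤ b := hlub.2 (WithTop.coe_mono.mem_upperBounds_image hb)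
  exact WithTop.coe_ne_top (WithTop.top_le_iff.mp htop)

theorem not_wellFiltered_withTop [TopologicalSpace P] [IsScott P univ]
    (hP : ∀ D : Set P, D.Nonempty → DirectedOn (· ≤ ·) D → BddAbove D)
    {ι : Type*} [Nonempty ι] {K : ι → Set P} (hne : ∀ i, (K i).Nonempty)
    (hcomp : ∀ i, IsCompact (K i)) (hupper : ∀ i, IsUpperSet (K i))
    (hdir : Directed (· ⊇ ·) K) (hinter : ⋂ i, K i = ∅) :
    ¬ WellFiltered (WithTop P) := by
  rintro ⟨-, hwf⟩
  let L (i : ι) : Set (WithTop P) := insert ⊤ ((↑) '' K i)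
  have hL : ∀ A ∈ range L, A.Nonempty ∧ IsCompact A ∧ Saturated A := by
    rintro _ ⟨i, rfl⟩
    exact ⟨insert_nonempty _ _, ((hcomp i).image continuous_withTop_coe).insert _,
      saturated_of_isUpperSet (isUpperSet_insert_top_image_coe (hupper i))⟩
  have hLdir : Directed (· ⊇ ·) L :=
    fun i j => (hdir i j).imp fun _ h =>
      ⟨insert_subset_insert (image_mono h.1), insert_subset_insert (image_mono h.2)⟩
  have hLinter : ⋂₀ range L ⊆ {⊤} := by
    intro x hx
    induction x with
    | top => rfl
    | coe a =>
      have ha : a ∈ ⋂ i, K i := mem_iInter.mpr fun i => by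
        simpa [L] using hx (L i) (mem_range_self i)
      simp [hinter] at ha
  obtain ⟨_, ⟨i, rfl⟩, hi⟩ := hwf (range L) (range_nonempty L) hL (directedOn_range.mpr hLdir)
    {⊤} (isOpen_singleton_withTop_top hP) hLinter
  obtain ⟨a, ha⟩ := hne i
  exact WithTop.coe_ne_top (hi (Or.inr (mem_image_of_mem _ ha)))

end WithTop

namespace Johnstone

theorem le_iff {p q : Johnstone} :
    p ≤ q ↔ (p.fst = q.fst ∧ p.snd ≤ q.snd) ∨ (q.snd = ⊤ ∧ p.snd ≤ (q.fst : WithTop ℕ)) :=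
  Iff.rfl

/-- The maximal element `(m, ω)` of `𝕁`. The tails of the sequence `omega` are the compact sets that
violate well-filteredness. -/
def omega (m : ℕ) : Johnstone := ⟨m, ⊤⟩

theorem omega_injective : Function.Injective omega := fun _ _ h => congrArg fst h

theorem isMax_omega (m : ℕ) : IsMax (omega m) := by
  rintro q (⟨hfst, -⟩ | ⟨-, hle⟩)
  · exact le_iff.mpr (Or.inl ⟨hfst.symm, le_top⟩)
  · exact absurd hle (by simp [omega])

theorem isUpperSet_image_omega (s : Set ℕ) : IsUpperSet (omega '' s) := by
  rintro _ q hq ⟨m, hm, rfl⟩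
  exact ⟨m, hm, (isMax_omega m).eq_of_le hq⟩

theorem fst_eq_of_le {p q : Johnstone} (h : p ≤ q) (hq : q.snd ≠ ⊤) : p.fst = q.fst :=
  (le_iff.mp h).elim And.left fun h => absurd h.1 hq

theorem bddAbove_of_directedOn {D : Set Johnstone} (hne : D.Nonempty)
    (hdir : DirectedOn (· ≤ ·) D) : BddAbove D := by
  by_cases hD : ∃ p ∈ D, p.snd = ⊤
  · obtain ⟨p, hpD, hp : p.snd = ⊤⟩ := hD
    have hmax : IsMax p := by
      obtain ⟨m, n⟩ := p
      subst hp
      exact isMax_omega m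
    exact ⟨p, hdir.is_top_of_is_max hpD fun q _ hq => hmax hq⟩
  · push Not at hD
    obtain ⟨e, he⟩ := hne
    refine ⟨omega e.fst, fun p hp => le_iff.mpr (Or.inl ⟨?_, le_top⟩)⟩
    obtain ⟨c, hc, hpc, hec⟩ := hdir p hp e he
    exact (fst_eq_of_le hpc (hD c hc)).trans (fst_eq_of_le hec (hD c hc)).symm

theorem monotone_mk_natCast (m : ℕ) : Monotone fun k : ℕ => (⟨m, k⟩ : Johnstone) :=
  fun _ _ h => le_iff.mpr (Or.inl ⟨rfl, Nat.cast_le.mpr h⟩)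

theorem isLUB_range_mk_natCast (m : ℕ) :
    IsLUB (range fun k : ℕ => (⟨m, k⟩ : Johnstone)) (omega m) := by
  refine ⟨forall_mem_range.mpr fun k => le_iff.mpr (Or.inl ⟨rfl, le_top⟩), fun q hq => ?_⟩
  have hle (k : ℕ) := le_iff.mp (hq (mem_range_self k))
  have hfst : m = q.fst := (hle (q.fst + 1)).elim And.left fun h =>
    absurd (Nat.cast_le.mp h.2) (Nat.not_succ_le_self _)
  have hsnd : q.snd = ⊤ := WithTop.eq_top_iff_forall_ge.mpr fun k =>
    (hle k).elim And.right fun h => h.1 ▸ le_top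
  exact le_iff.mpr (Or.inl ⟨hfst, hsnd.ge⟩)

section Topology

variable [TopologicalSpace Johnstone] [IsScott Johnstone univ]

theorem tendsto_omega (m : ℕ) : Tendsto omega atTop (𝓝 (omega m)) := by
  refine tendsto_atTop_nhds.mpr fun U hm hU => ?_
  obtain ⟨hupper, hinacc⟩ :=
    (IsScott.isOpen_iff_isUpperSet_and_dirSupInaccOn (D := univ)).mp hU
  obtain ⟨_, ⟨k, rfl⟩, hk⟩ := hinacc (mem_univ _) (range_nonempty _)
    (directedOn_range.mpr (monotone_mk_natCast m).directed_le) (isLUB_range_mk_natCast m) hm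
  exact ⟨k, fun j hj => hupper (le_iff.mpr (Or.inr ⟨rfl, Nat.cast_le.mpr hj⟩)) hk⟩

theorem isCompact_image_omega_Ici (n : ℕ) : IsCompact (omega '' Ici n) := by
  have hIci : range (· + n) = Ici n :=
    Set.ext fun k => ⟨fun ⟨j, hj⟩ => hj ▸ Nat.le_add_left n j,
      fun h => ⟨k - n, Nat.sub_add_cancel h⟩⟩
  have hlim : Tendsto (omega ∘ (· + n)) atTop (𝓝 (omega n)) :=
    (tendsto_omega n).comp (tendsto_add_atTop_nat n)
  have hcomp := hlim.isCompact_insert_range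
  rwa [range_comp, hIci, insert_eq_of_mem (mem_image_of_mem omega self_mem_Ici)] at hcomp

end Topology

theorem iInter_image_omega_Ici : ⋂ n, omega '' Ici n = ∅ := by
  rw [← omega_injective.injOn.image_iInter_eq, image_eq_empty, ← not_nonempty_iff_eq_empty,
    nonempty_iInter_Ici_iff]
  simp

end Johnstone

/-- The Scott space of the Johnstone dcpo with a top adjoined, `Σ 𝕁_⊤`,
is not well-filtered. -/
theorem stmt16 :
    ¬ @WellFiltered (WithTop Johnstone) (scottTop (WithTop Johnstone)) := by
  let := scottTop Johnstone
  let := scottTop (WithTop Johnstone)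
  have := isScott_scottTop Johnstone
  have := isScott_scottTop (WithTop Johnstone)
  have htails : Antitone fun n : ℕ => Johnstone.omega '' Ici n :=
    fun _ _ h => image_mono (Ici_subset_Ici.mpr h)
  exact not_wellFiltered_withTop (fun _ => Johnstone.bddAbove_of_directedOn)
    (fun _ => nonempty_Ici.image _) Johnstone.isCompact_image_omega_Ici
    (fun n => Johnstone.isUpperSet_image_omega (Ici n)) htails.directed_ge
    Johnstone.iInter_image_omega_Ici
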